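/- Let Σ = {a, b, c} be a three-letter alphabet. For any relatively prime integers n₁, n₂ ≥ 2 there exist regular languages L₁, L₂ ⊆ Σ* with tc(Lᵢ) = nᵢ + 1 (i = 1, 2) such that tc(L₁ ∪ L₂) = tc(L₁)·tc(L₂) + tc(L₁) + tc(L₂) − 1. -/

import Mathlib

/-- An incomplete DFA over alphabet `α` with state type `σ`:
the transition function is a partial function, modelled as `Option`-valued. -/
structure IDFA (α : Type) (σ : Type) where
  /-- The (partial) transition function. -/
  step : σ → α → Option σ
  /-- The start state. -/
  start : σ
  /-- The set of accepting states. -/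
  accept : Set σ

namespace IDFA

variable {α σ : Type}

/-- The extended (partial) transition function on words. -/
def evalFrom (A : IDFA α σ) (q : σ) (w : List α) : Option σ :=
  w.foldl (fun oq a => oq.bind fun p => A.step p a) (some q)

/-- Running the automaton from the start state. -/
def eval (A : IDFA α σ) (w : List α) : Option σ :=
  A.evalFrom A.start w

/-- The language recognized by an incomplete DFA: words on which the run is
defined and ends in an accepting state. -/
def accepts (A : IDFA α σ) : Set (List α) :=
  {w | ∃ q ∈ A.accept, A.eval w = some q}

/-- `#tr(A)`: the number of (defined) transitions of `A`. -/
noncomputable def trCount (A : IDFA α σ) : ℕ :=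
  {p : σ × α | (A.step p.1 p.2).isSome}.ncard

/-- `#tr(A, b)`: the number of `b`-transitions of `A`. -/
noncomputable def trCountOn (A : IDFA α σ) (b : α) : ℕ :=
  {q : σ | (A.step q b).isSome}.ncard

/-- An incomplete DFA is connected if every state is reachable from the start state. -/
def Connected (A : IDFA α σ) : Prop :=
  ∀ q : σ, ∃ w : List α, A.evalFrom A.start w = some q

end IDFA

/-- A language is regular iff it is recognized by some incomplete DFA with
finitely many states. -/
def IsRegularLang {α : Type} (L : Set (List α)) : Prop :=
  ∃ (σ : Type) (_ : Finite σ) (A : IDFA α σ), A.accepts = L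

/-- `tc(L)`: the transition complexity of `L`, i.e. the minimal number of
transitions of any incomplete DFA recognizing `L`. -/
noncomputable def tc {α : Type} (L : Set (List α)) : ℕ :=
  sInf {n | ∃ (σ : Type) (_ : Finite σ) (A : IDFA α σ), A.accepts = L ∧ A.trCount = n}

/-- `tc_b(L)`: the `b`-transition complexity of `L`, i.e. the minimal number of
`b`-transitions of any incomplete DFA recognizing `L`. -/
noncomputable def tcOn {α : Type} (L : Set (List α)) (b : α) : ℕ :=
  sInf {n | ∃ (σ : Type) (_ : Finite σ) (A : IDFA α σ), A.accepts = L ∧ A.trCountOn b = n}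

/-- `sc(L)`: the (incomplete-DFA) state complexity of `L`, i.e. the number of
states of a minimal incomplete DFA recognizing `L`. -/
noncomputable def sc {α : Type} (L : Set (List α)) : ℕ :=
  sInf {n | ∃ (σ : Type) (_ : Finite σ) (A : IDFA α σ), A.accepts = L ∧ Nat.card σ = n}

/-!
A minimal incomplete DFA embeds into every incomplete DFA with the same language, and the embedding
preserves definedness of transitions, so a minimal automaton realises `tc`.

The witnesses are `L₁ = (a ^ n₁ ∪ b)*` and `L₂ = (a ^ n₂ ∪ c)*`, recognized by an `a`-cycle of
length `nᵢ` with a loop on the private letter `b` or `c` at state `0`. In the product automaton for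
the union, the Chinese remainder theorem makes all pairs reachable along powers of `a`, a private
letter kills the other component, and some power of `a` followed by a private letter is accepted
from a prescribed state of one cycle only and from no state of the other; hence the product is
minimal. Once each factor is given a dead state, inclusion-exclusion counts its transitions letter
by letter.
-/

namespace IDFA

variable {α σ τ : Type}

/-! ### Runs and residual languages -/

theorem evalFrom_cons (A : IDFA α σ) (q : σ) (x : α) (w : List α) :
    A.evalFrom q (x :: w) = (A.step q x).bind (A.evalFrom · w) := by
  have foldl_none (v : List α) : v.foldl (fun oq y => oq.bind (A.step · y)) none = none := by
    induction v with
    | nil => rfl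
    | cons _ _ ih => exact ih
  change w.foldl _ (A.step q x) = _
  cases A.step q x with
  | none => exact foldl_none w
  | some p => rfl

theorem evalFrom_append (A : IDFA α σ) (q : σ) (u v : List α) :
    A.evalFrom q (u ++ v) = (A.evalFrom q u).bind (A.evalFrom · v) := by
  induction u generalizing q with
  | nil => rfl
  | cons x u ih => simp only [List.cons_append, evalFrom_cons, ih, Option.bind_assoc]

/-- The residual (right) language of a state: the words accepted by a run that starts there. -/
def acceptsFrom (A : IDFA α σ) (q : σ) : Set (List α) :=
  {w | ∃ f ∈ A.accept, A.evalFrom q w = some f}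

theorem append_mem_acceptsFrom_iff (A : IDFA α σ) (q : σ) (u v : List α) :
    u ++ v ∈ A.acceptsFrom q ↔ ∃ p, A.evalFrom q u = some p ∧ v ∈ A.acceptsFrom p := by
  simp only [acceptsFrom, Set.mem_ofPred_eq, evalFrom_append, Option.bind_eq_some_iff]
  tauto

theorem cons_mem_acceptsFrom_iff (A : IDFA α σ) (q : σ) (x : α) (v : List α) :
    x :: v ∈ A.acceptsFrom q ↔ ∃ p, A.step q x = some p ∧ v ∈ A.acceptsFrom p :=
  A.append_mem_acceptsFrom_iff q [x] v

/-! ### Minimal automata -/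

/-- Minimality of an incomplete DFA, in its intrinsic form: every state is reachable and live, and
distinct states have distinct residual languages. -/
structure IsMinimal (A : IDFA α σ) : Prop where
  connected : A.Connected
  acceptsFrom_nonempty : ∀ q, (A.acceptsFrom q).Nonempty
  acceptsFrom_injective : Function.Injective A.acceptsFrom

/-- The word `w` isolates the state `q`: it is accepted from `q` and from no other state. -/
def Isolates (A : IDFA α σ) (w : List α) (q : σ) : Prop :=
  ∀ p, w ∈ A.acceptsFrom p ↔ p = q

theorem Connected.isMinimal_of_isolates {A : IDFA α σ} (hconn : A.Connected)
    (hisol : ∀ q, ∃ w, A.Isolates w q) : A.IsMinimal where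
  connected := hconn
  acceptsFrom_nonempty q := (hisol q).imp fun _ hw => (hw q).2 rfl
  acceptsFrom_injective p q hpq := by
    obtain ⟨w, hw⟩ := hisol q
    exact (hw p).1 (hpq ▸ (hw q).2 rfl)

theorem IsMinimal.exists_acceptsFrom_eq {A : IDFA α σ} {B : IDFA α τ} (hB : B.IsMinimal)
    (hL : A.accepts = B.accepts) (q : τ) : ∃ p, A.acceptsFrom p = B.acceptsFrom q := by
  obtain ⟨u, hu⟩ := hB.connected q
  have residual (v : List α) :
      v ∈ B.acceptsFrom q ↔ ∃ p, A.evalFrom A.start u = some p ∧ v ∈ A.acceptsFrom p := by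
    rw [← append_mem_acceptsFrom_iff]
    change _ ↔ u ++ v ∈ A.accepts
    rw [hL]
    change _ ↔ u ++ v ∈ B.acceptsFrom B.start
    simp [append_mem_acceptsFrom_iff, hu]
  obtain ⟨v, hv⟩ := hB.acceptsFrom_nonempty q
  obtain ⟨p, hp, -⟩ := (residual v).1 hv
  exact ⟨p, Set.ext fun v => by simp [residual, hp]⟩

theorem IsMinimal.isSome_step_of_acceptsFrom_eq {A : IDFA α σ} {B : IDFA α τ} (hB : B.IsMinimal)
    {p : σ} {q : τ} (hpq : A.acceptsFrom p = B.acceptsFrom q) {x : α}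
    (hx : (B.step q x).isSome) : (A.step p x).isSome := by
  obtain ⟨r, hr⟩ := Option.isSome_iff_exists.1 hx
  obtain ⟨v, hv⟩ := hB.acceptsFrom_nonempty r
  have hxv : x :: v ∈ A.acceptsFrom p := hpq ▸ (B.cons_mem_acceptsFrom_iff q x v).2 ⟨r, hr, hv⟩
  obtain ⟨s, hs, -⟩ := (A.cons_mem_acceptsFrom_iff p x v).1 hxv
  exact Option.isSome_iff_exists.2 ⟨s, hs⟩

theorem IsMinimal.trCount_le [Finite α] [Finite σ] {A : IDFA α σ} {B : IDFA α τ}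
    (hB : B.IsMinimal) (hL : A.accepts = B.accepts) : B.trCount ≤ A.trCount := by
  choose f hf using hB.exists_acceptsFrom_eq hL
  have hf_inj : Function.Injective f := fun q q' h =>
    hB.acceptsFrom_injective (by rw [← hf, ← hf, h])
  exact Set.ncard_le_ncard_of_injOn (Prod.map f id)
    (fun p hp => hB.isSome_step_of_acceptsFrom_eq (hf p.1) hp)
    (hf_inj.prodMap Function.injective_id).injOn (Set.toFinite _)

theorem IsMinimal.tc_accepts [Finite α] [Finite σ] {A : IDFA α σ} (hA : A.IsMinimal) :
    tc A.accepts = A.trCount := by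
  refine le_antisymm (Nat.sInf_le ⟨σ, inferInstance, A, rfl, rfl⟩)
    (le_csInf ⟨_, σ, inferInstance, A, rfl, rfl⟩ ?_)
  rintro _ ⟨ρ, _, C, hL, rfl⟩
  exact hA.trCount_le hL

theorem trCount_eq_sum_trCountOn [Fintype α] [Finite σ] (A : IDFA α σ) :
    A.trCount = ∑ x, A.trCountOn x := by
  classical
  have := Fintype.ofFinite σ
  simp only [trCount, trCountOn, Set.ncard_eq_toFinset_card', Set.toFinset_ofPred,
    Finset.card_filter, Fintype.sum_prod_type_right]

/-! ### The product automaton for the union -/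

/-- States of the product automaton: pairs of states in which at most one component is `none`,
which marks a run that has died. -/
abbrev UnionState (σ τ : Type) : Type :=
  {s : Option σ × Option τ // s.1.isSome ∨ s.2.isSome}

/-- The state with the given components, undefined when both runs have died. -/
def UnionState.mk? (s : Option σ × Option τ) : Option (UnionState σ τ) :=
  if h : s.1.isSome ∨ s.2.isSome then some ⟨s, h⟩ else none

theorem UnionState.mk?_eq_some_iff {s : Option σ × Option τ} {t : UnionState σ τ} :
    mk? s = some t ↔ s = t := by
  by_cases h : s.1.isSome ∨ s.2.isSome
  · simp [mk?, h, Subtype.ext_iff]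
  · simpa [mk?, h] using fun hst : s = t => h (hst ▸ t.2)

theorem UnionState.isSome_mk?_iff {s : Option σ × Option τ} :
    (mk? s).isSome ↔ s.1.isSome ∨ s.2.isSome := by
  by_cases h : s.1.isSome ∨ s.2.isSome <;> simp [mk?, h]

/-- The product automaton for `A.accepts ∪ B.accepts`: it runs `A` and `B` in parallel as long as
one of the runs is defined and accepts when one of them does. -/
def union (A : IDFA α σ) (B : IDFA α τ) : IDFA α (UnionState σ τ) where
  step s x := UnionState.mk? (s.1.1.bind (A.step · x), s.1.2.bind (B.step · x))
  start := ⟨(some A.start, some B.start), .inl rfl⟩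
  accept := {s | (∃ p ∈ s.1.1, p ∈ A.accept) ∨ ∃ q ∈ s.1.2, q ∈ B.accept}

theorem evalFrom_union (A : IDFA α σ) (B : IDFA α τ) (s : UnionState σ τ) (w : List α) :
    (A.union B).evalFrom s w =
      UnionState.mk? (s.1.1.bind (A.evalFrom · w), s.1.2.bind (B.evalFrom · w)) := by
  induction w generalizing s with
  | nil => exact (UnionState.mk?_eq_some_iff.2 (by simp [evalFrom])).symm
  | cons x w ih =>
    simp only [evalFrom_cons, ← Option.bind_assoc, union]
    generalize s.1.1.bind (A.step · x) = u
    generalize s.1.2.bind (B.step · x) = v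
    by_cases h : u.isSome ∨ v.isSome
    · rw [show UnionState.mk? (u, v) = some ⟨(u, v), h⟩ from dif_pos h]
      exact ih _
    · obtain ⟨rfl, rfl⟩ : u = none ∧ v = none := by simpa using h
      rfl

theorem mem_acceptsFrom_union (A : IDFA α σ) (B : IDFA α τ) (s : UnionState σ τ) (w : List α) :
    w ∈ (A.union B).acceptsFrom s ↔
      (∃ p ∈ s.1.1, w ∈ A.acceptsFrom p) ∨ ∃ q ∈ s.1.2, w ∈ B.acceptsFrom q := by
  have accepted_iff (u : Option σ) (v : Option τ) :
      (∃ t ∈ (A.union B).accept, UnionState.mk? (u, v) = some t) ↔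
        (∃ p ∈ u, p ∈ A.accept) ∨ ∃ q ∈ v, q ∈ B.accept := by
    simp only [UnionState.mk?_eq_some_iff]
    constructor
    · rintro ⟨t, ht, huv⟩
      obtain ⟨rfl, rfl⟩ := Prod.ext_iff.1 huv
      exact ht
    · refine fun h => ⟨⟨(u, v), ?_⟩, h, rfl⟩
      exact h.imp (fun ⟨p, hp, _⟩ => Option.isSome_of_mem hp)
        fun ⟨q, hq, _⟩ => Option.isSome_of_mem hq
  change (∃ t ∈ (A.union B).accept, (A.union B).evalFrom s w = some t) ↔ _
  rw [evalFrom_union, accepted_iff]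
  simp only [acceptsFrom, Set.mem_ofPred_eq, Option.mem_def, Option.bind_eq_some_iff]
  grind

theorem accepts_union (A : IDFA α σ) (B : IDFA α τ) :
    (A.union B).accepts = A.accepts ∪ B.accepts := by
  ext w
  change w ∈ (A.union B).acceptsFrom _ ↔ w ∈ A.acceptsFrom _ ∨ w ∈ B.acceptsFrom _
  rw [mem_acceptsFrom_union]
  simp [union]

theorem connected_union_iff {A : IDFA α σ} {B : IDFA α τ} :
    (A.union B).Connected ↔ ∀ s : UnionState σ τ, ∃ w, A.eval w = s.1.1 ∧ B.eval w = s.1.2 := by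
  simp only [Connected, evalFrom_union, UnionState.mk?_eq_some_iff, Prod.ext_iff]
  rfl

theorem isMinimal_union {A : IDFA α σ} {B : IDFA α τ} (hconn : (A.union B).Connected)
    (hA : ∀ p, ∃ w, A.Isolates w p ∧ ∀ q, w ∉ B.acceptsFrom q)
    (hB : ∀ q, ∃ w, B.Isolates w q ∧ ∀ p, w ∉ A.acceptsFrom p) :
    (A.union B).IsMinimal := by
  have left (p : σ) : ∃ w, ∀ s, w ∈ (A.union B).acceptsFrom s ↔ p ∈ s.1.1 := by
    obtain ⟨w, hwA, hwB⟩ := hA p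
    exact ⟨w, fun s => by simp [mem_acceptsFrom_union, hwA _, hwB]⟩
  have right (q : τ) : ∃ w, ∀ s, w ∈ (A.union B).acceptsFrom s ↔ q ∈ s.1.2 := by
    obtain ⟨w, hwB, hwA⟩ := hB q
    exact ⟨w, fun s => by simp [mem_acceptsFrom_union, hwA, hwB _]⟩
  refine ⟨hconn, fun s => ?_, fun s t hst => Subtype.ext (Prod.ext ?_ ?_)⟩
  · obtain h | h := s.2 <;> obtain ⟨r, hr⟩ := Option.isSome_iff_exists.1 h
    · exact (left r).imp fun w hw => (hw _).2 hr
    · exact (right r).imp fun w hw => (hw _).2 hr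
  · ext p
    obtain ⟨w, hw⟩ := left p
    exact (hw s).symm.trans (hst ▸ hw t)
  · ext q
    obtain ⟨w, hw⟩ := right q
    exact (hw s).symm.trans (hst ▸ hw t)

/-! ### Counting the transitions of the product -/

theorem ncard_isSome_bind_step (A : IDFA α σ) (x : α) :
    {u : Option σ | (u.bind (A.step · x)).isSome}.ncard = A.trCountOn x := by
  rw [trCountOn, ← Set.ncard_image_of_injective _ (Option.some_injective σ)]
  congr 1
  ext u
  cases u <;> simp

theorem trCountOn_union [Finite σ] [Finite τ] (A : IDFA α σ) (B : IDFA α τ) (x : α) :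
    (A.union B).trCountOn x + A.trCountOn x * B.trCountOn x =
      A.trCountOn x * (Nat.card τ + 1) + (Nat.card σ + 1) * B.trCountOn x := by
  set U : Set (Option σ) := {u | (u.bind (A.step · x)).isSome}
  set V : Set (Option τ) := {v | (v.bind (B.step · x)).isSome}
  have hUV : (A.union B).trCountOn x = (U ×ˢ Set.univ ∪ Set.univ ×ˢ V).ncard := by
    rw [trCountOn, ← Set.ncard_image_of_injective _ Subtype.val_injective]
    congr 1
    ext s
    have defined_iff : s ∈ U ×ˢ Set.univ ∪ Set.univ ×ˢ V ↔
        (s.1.bind (A.step · x)).isSome ∨ (s.2.bind (B.step · x)).isSome := by simp [U, V]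
    have alive_of_defined (h : s ∈ U ×ˢ Set.univ ∪ Set.univ ×ˢ V) : s.1.isSome ∨ s.2.isSome :=
      (defined_iff.1 h).imp Option.isSome_of_isSome_bind Option.isSome_of_isSome_bind
    simp only [Set.mem_image, Set.mem_ofPred_eq, union, UnionState.isSome_mk?_iff]
    constructor
    · rintro ⟨t, ht, rfl⟩
      exact defined_iff.2 ht
    · exact fun h => ⟨⟨s, alive_of_defined h⟩, defined_iff.1 h, rfl⟩
  have hinter : U ×ˢ Set.univ ∩ Set.univ ×ˢ V = U ×ˢ V := by
    rw [Set.prod_inter_prod, Set.inter_univ, Set.univ_inter]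
  rw [hUV, ← ncard_isSome_bind_step A, ← ncard_isSome_bind_step B, ← Set.ncard_prod, ← hinter,
    Set.ncard_union_add_ncard_inter, Set.ncard_prod, Set.ncard_prod, Set.ncard_univ,
    Set.ncard_univ, Finite.card_option, Finite.card_option]

theorem trCount_union [Fintype α] [Finite σ] [Finite τ] (A : IDFA α σ) (B : IDFA α τ) :
    (A.union B).trCount + ∑ x, A.trCountOn x * B.trCountOn x =
      A.trCount * (Nat.card τ + 1) + (Nat.card σ + 1) * B.trCount := by
  simp only [trCount_eq_sum_trCountOn, Finset.sum_mul, Finset.mul_sum, ← Finset.sum_add_distrib,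
    trCountOn_union]

/-! ### Cyclic automata with one loop -/

section Cyclic

variable [DecidableEq α] (n : ℕ) (a b : α)

/-- The incomplete DFA of `(a ^ n ∪ b)*`: an `a`-cycle on `ZMod n` with a `b`-loop at `0`. For
`n = 0` the state type is `ℤ`. -/
def cyclic : IDFA α (ZMod n) where
  step i x := if x = a then some (i + 1) else if x = b ∧ i = 0 then some 0 else none
  start := 0
  accept := {0}

theorem step_cyclic_self (i : ZMod n) : (cyclic n a b).step i a = some (i + 1) :=
  if_pos rfl

theorem evalFrom_cyclic_replicate (i : ZMod n) (k : ℕ) :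
    (cyclic n a b).evalFrom i (List.replicate k a) = some (i + k) := by
  induction k generalizing i with
  | zero => simp [evalFrom]
  | succ k ih =>
    rw [List.replicate_succ, evalFrom_cons, step_cyclic_self, Option.bind_some, ih, Nat.cast_succ,
      add_assoc, add_comm 1]

theorem eval_cyclic_replicate (k : ℕ) :
    (cyclic n a b).eval (List.replicate k a) = some (k : ZMod n) :=
  (evalFrom_cyclic_replicate n a b 0 k).trans (by rw [zero_add])

variable {n a b}

theorem step_cyclic_loop (hab : a ≠ b) (i : ZMod n) :
    (cyclic n a b).step i b = if i = 0 then some 0 else none := by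
  simp [cyclic, hab.symm]

theorem step_cyclic_of_ne {x : α} (hxa : x ≠ a) (hxb : x ≠ b) (i : ZMod n) :
    (cyclic n a b).step i x = none := by
  simp [cyclic, hxa, hxb]

theorem eval_cyclic_loop_cons_replicate (hab : a ≠ b) (k : ℕ) :
    (cyclic n a b).eval (b :: List.replicate k a) = some (k : ZMod n) := by
  have loop_at_start : (cyclic n a b).step (cyclic n a b).start b = some (cyclic n a b).start :=
    (step_cyclic_loop hab 0).trans (if_pos rfl)
  rw [eval, evalFrom_cons, loop_at_start]
  exact eval_cyclic_replicate n a b k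

theorem eval_cyclic_cons_of_ne {x : α} (hxa : x ≠ a) (hxb : x ≠ b) (w : List α) :
    (cyclic n a b).eval (x :: w) = none := by
  rw [eval, evalFrom_cons, step_cyclic_of_ne hxa hxb, Option.bind_none]

theorem append_loop_mem_acceptsFrom_cyclic_iff (hab : a ≠ b) (i : ZMod n) (k : ℕ) :
    List.replicate k a ++ [b] ∈ (cyclic n a b).acceptsFrom i ↔ i = -k := by
  have nil_mem : [] ∈ (cyclic n a b).acceptsFrom 0 := ⟨0, rfl, rfl⟩
  rw [append_mem_acceptsFrom_iff, evalFrom_cyclic_replicate, eq_neg_iff_add_eq_zero]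
  simp [cons_mem_acceptsFrom_iff, step_cyclic_loop hab, nil_mem]

theorem append_notMem_acceptsFrom_cyclic {x : α} (hxa : x ≠ a) (hxb : x ≠ b) (w : List α)
    (i : ZMod n) : w ++ [x] ∉ (cyclic n a b).acceptsFrom i := by
  simp [append_mem_acceptsFrom_iff, cons_mem_acceptsFrom_iff, step_cyclic_of_ne hxa hxb]

theorem exists_isolates_cyclic [NeZero n] (hab : a ≠ b) (i : ZMod n) :
    ∃ k, (cyclic n a b).Isolates (List.replicate k a ++ [b]) i :=
  ⟨(-i).val, fun j => by simp [append_loop_mem_acceptsFrom_cyclic_iff hab]⟩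

theorem isMinimal_cyclic [NeZero n] (hab : a ≠ b) : (cyclic n a b).IsMinimal := by
  have hconn : (cyclic n a b).Connected := fun i =>
    ⟨List.replicate i.val a, (eval_cyclic_replicate n a b i.val).trans (by simp)⟩
  refine hconn.isMinimal_of_isolates fun i => ?_
  obtain ⟨k, hk⟩ := exists_isolates_cyclic hab i
  exact ⟨_, hk⟩

theorem trCountOn_cyclic_self : (cyclic n a b).trCountOn a = n := by
  simp [trCountOn, step_cyclic_self]

theorem trCountOn_cyclic_loop (hab : a ≠ b) : (cyclic n a b).trCountOn b = 1 := by
  simp [trCountOn, step_cyclic_loop hab]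

theorem trCountOn_cyclic_of_ne {x : α} (hxa : x ≠ a) (hxb : x ≠ b) :
    (cyclic n a b).trCountOn x = 0 := by
  simp [trCountOn, step_cyclic_of_ne hxa hxb]

variable [Finite α] [NeZero n]

theorem trCount_cyclic (hab : a ≠ b) : (cyclic n a b).trCount = n + 1 := by
  have := Fintype.ofFinite α
  rw [trCount_eq_sum_trCountOn, Fintype.sum_eq_add a b hab, trCountOn_cyclic_self,
    trCountOn_cyclic_loop hab]
  exact fun x hx => trCountOn_cyclic_of_ne hx.1 hx.2

theorem tc_cyclic (hab : a ≠ b) : tc (cyclic n a b).accepts = n + 1 := by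
  rw [(isMinimal_cyclic hab).tc_accepts, trCount_cyclic hab]

end Cyclic

/-! ### The union of two cyclic automata -/

section UnionCyclic

variable [DecidableEq α] {m n : ℕ} [NeZero m] [NeZero n] {a b c : α}

theorem connected_union_cyclic (hab : a ≠ b) (hac : a ≠ c) (hbc : b ≠ c) (hmn : m.Coprime n) :
    ((cyclic m a b).union (cyclic n a c)).Connected := by
  rw [connected_union_iff]
  rintro ⟨⟨_ | i, _ | j⟩, hs⟩
  · simp at hs
  · exact ⟨c :: List.replicate j.val a, eval_cyclic_cons_of_ne hac.symm hbc.symm _,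
      (eval_cyclic_loop_cons_replicate hac _).trans (by simp)⟩
  · exact ⟨b :: List.replicate i.val a, (eval_cyclic_loop_cons_replicate hab _).trans (by simp),
      eval_cyclic_cons_of_ne hab.symm hbc _⟩
  · obtain ⟨k, hki, hkj⟩ := Nat.chineseRemainder hmn i.val j.val
    rw [← ZMod.natCast_eq_natCast_iff, ZMod.natCast_zmod_val] at hki hkj
    exact ⟨List.replicate k a, by rw [eval_cyclic_replicate, hki],
      by rw [eval_cyclic_replicate, hkj]⟩

theorem isMinimal_union_cyclic (hab : a ≠ b) (hac : a ≠ c) (hbc : b ≠ c) (hmn : m.Coprime n) :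
    ((cyclic m a b).union (cyclic n a c)).IsMinimal := by
  refine isMinimal_union (connected_union_cyclic hab hac hbc hmn) (fun i => ?_) fun j => ?_
  · obtain ⟨k, hk⟩ := exists_isolates_cyclic hab i
    exact ⟨_, hk, append_notMem_acceptsFrom_cyclic hab.symm hbc _⟩
  · obtain ⟨k, hk⟩ := exists_isolates_cyclic hac j
    exact ⟨_, hk, append_notMem_acceptsFrom_cyclic hac.symm hbc.symm _⟩

variable [Finite α]

theorem trCount_union_cyclic (hab : a ≠ b) (hac : a ≠ c) (hbc : b ≠ c) :
    ((cyclic m a b).union (cyclic n a c)).trCount + m * n = 2 * ((m + 1) * (n + 1)) := by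
  have := Fintype.ofFinite α
  have only_shared_letter :
      ∑ x, (cyclic m a b).trCountOn x * (cyclic n a c).trCountOn x = m * n := by
    rw [Fintype.sum_eq_single a, trCountOn_cyclic_self, trCountOn_cyclic_self]
    intro x hxa
    rcases eq_or_ne x b with rfl | hxb
    · rw [trCountOn_cyclic_of_ne hxa hbc, mul_zero]
    · rw [trCountOn_cyclic_of_ne hxa hxb, zero_mul]
  have count := trCount_union (cyclic m a b) (cyclic n a c)
  rwa [only_shared_letter, trCount_cyclic hab, trCount_cyclic hac, Nat.card_zmod, Nat.card_zmod,
    ← two_mul] at count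

theorem tc_union_cyclic (hab : a ≠ b) (hac : a ≠ c) (hbc : b ≠ c) (hmn : m.Coprime n) :
    tc ((cyclic m a b).accepts ∪ (cyclic n a c).accepts) + m * n = 2 * ((m + 1) * (n + 1)) := by
  rw [← accepts_union, (isMinimal_union_cyclic hab hac hbc hmn).tc_accepts,
    trCount_union_cyclic hab hac hbc]

end UnionCyclic

end IDFA

theorem tc_union_lower_bound_three_letters_general {α : Type} (hα : 3 ≤ Nat.card α)
    (n₁ n₂ : ℕ) (hn₁ : n₁ ≠ 0) (hn₂ : n₂ ≠ 0) (hcop : Nat.Coprime n₁ n₂) :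
    ∃ L₁ L₂ : Set (List α), IsRegularLang L₁ ∧ IsRegularLang L₂ ∧
      tc L₁ = n₁ + 1 ∧ tc L₂ = n₂ + 1 ∧
      tc (L₁ ∪ L₂) = tc L₁ * tc L₂ + tc L₁ + tc L₂ - 1 := by
  classical
  have := NeZero.mk hn₁
  have := NeZero.mk hn₂
  have : Finite α := Nat.finite_of_card_ne_zero (by omega)
  have := Fintype.ofFinite α
  rw [Nat.card_eq_fintype_card] at hα
  obtain ⟨a, b, c, hab, hac, hbc⟩ := Fintype.two_lt_card_iff.1 hα
  refine ⟨(IDFA.cyclic n₁ a b).accepts, (IDFA.cyclic n₂ a c).accepts,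
    ⟨_, inferInstance, _, rfl⟩, ⟨_, inferInstance, _, rfl⟩, IDFA.tc_cyclic hab,
    IDFA.tc_cyclic hac, ?_⟩
  have tc_union := IDFA.tc_union_cyclic hab hac hbc hcop
  rw [IDFA.tc_cyclic hab, IDFA.tc_cyclic hac]
  refine (Nat.sub_eq_of_eq_add ?_).symm
  linarith

/-- over a three-letter alphabet, for relatively prime `n₁, n₂ ≥ 2`
there are languages with `tc(Lᵢ) = nᵢ + 1` and
`tc(L₁ ∪ L₂) = tc(L₁)·tc(L₂) + tc(L₁) + tc(L₂) - 1`. -/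
theorem tc_union_lower_bound_three_letters
    (n₁ n₂ : ℕ) (hn₁ : 2 ≤ n₁) (hn₂ : 2 ≤ n₂) (hcop : Nat.Coprime n₁ n₂) :
    ∃ L₁ L₂ : Set (List (Fin 3)), IsRegularLang L₁ ∧ IsRegularLang L₂ ∧
      tc L₁ = n₁ + 1 ∧ tc L₂ = n₂ + 1 ∧
      tc (L₁ ∪ L₂) = tc L₁ * tc L₂ + tc L₁ + tc L₂ - 1 := by
  exact tc_union_lower_bound_three_letters_general (by simp) n₁ n₂ (by omega) (by omega) hcop
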